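/- Let n ≥ 2. Deleting the first four letters gives a bijection from the set of reduced decompositions of w_0^B ∈ B_n whose first four letters are (0,1,0,1) onto R(w′), and likewise a bijection from the set of reduced decompositions of w_0^B whose first four letters are (1,0,1,0) onto R(w′). Consequently, the number of reduced decompositions of w_0^B beginning with (0,1,0,1) or (1,0,1,0) equals 2·|R(w′)|. -/

import Mathlib

/-- The generator `sᵢ` of the hyperoctahedral group `Bₙ`, realized as a permutation of `ℤ`:
`s₀` swaps `1` and `-1`; for `i ≥ 1`, `sᵢ` swaps `i` with `i+1` and `-i` with `-(i+1)`,
fixing all other integers. -/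
def sB (i : ℕ) : Equiv.Perm ℤ :=
  if i = 0 then Equiv.swap 1 (-1)
  else Equiv.swap (i : ℤ) ((i : ℤ) + 1) * Equiv.swap (-(i : ℤ)) (-((i : ℤ) + 1))

/-- The product `s_{i₁} ⋯ s_{i_ℓ}` corresponding to the word `i₁ ⋯ i_ℓ`. -/
def wordProd (l : List ℕ) : Equiv.Perm ℤ := (l.map sB).prod

/-- The underlying function of the longest element `w₀ᴮ ∈ Bₙ`: `i ↦ -i` on `{-n, …, n}`,
fixing all other integers. -/
def w0BFun (n : ℕ) : ℤ → ℤ := fun i => if -(n : ℤ) ≤ i ∧ i ≤ (n : ℤ) then -i else i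

lemma w0BFun_involutive (n : ℕ) : Function.Involutive (w0BFun n) := by
  intro i
  unfold w0BFun
  split_ifs <;> omega

/-- The longest element `w₀ᴮ ∈ Bₙ`, as a permutation of `ℤ`. -/
def w0B (n : ℕ) : Equiv.Perm ℤ := (w0BFun_involutive n).toPerm

/-- `l` is a reduced decomposition of `w` in `Bₙ`: a word over the alphabet `{0, …, n-1}`
whose product of generators is `w`, of minimal length among all such words. -/
def IsReducedWord (n : ℕ) (w : Equiv.Perm ℤ) (l : List ℕ) : Prop :=
  (∀ i ∈ l, i < n) ∧ wordProd l = w ∧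
    ∀ l' : List ℕ, (∀ i ∈ l', i < n) → wordProd l' = w → l.length ≤ l'.length

/-- `R(w)`, the set of reduced decompositions of `w` in `Bₙ`. -/
def RSet (n : ℕ) (w : Equiv.Perm ℤ) : Set (List ℕ) := {l | IsReducedWord n w l}

/-- The length `ℓ(w)` of `w ∈ Bₙ`: the minimal length of a word over `{0, …, n-1}`
whose product of generators is `w`. -/
noncomputable def lenB (n : ℕ) (w : Equiv.Perm ℤ) : ℕ :=
  sInf {m : ℕ | ∃ l : List ℕ, (∀ i ∈ l, i < n) ∧ wordProd l = w ∧ l.length = m}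

/-- Whether a word begins with `k (k+1) k` or `(k+1) k (k+1)` for some `k ≥ 1`. -/
def isYB : List ℕ → Bool
  | a :: b :: c :: _ => (a != 0 && b == a + 1 && c == a) || (b != 0 && a == b + 1 && c == b + 1)
  | _ => false

/-- The number of Yang–Baxter moves in a word. -/
def ybCount (l : List ℕ) : ℕ :=
  ((Finset.range l.length).filter fun j => isYB (l.drop j) = true).card

/-- Whether a word begins with `0101` or `1010`. -/
def is01 : List ℕ → Bool
  | a :: b :: c :: d :: _ =>
      (a == 0 && b == 1 && c == 0 && d == 1) || (a == 1 && b == 0 && c == 1 && d == 0)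
  | _ => false

/-- The number of 01 moves in a word. -/
def m01Count (l : List ℕ) : ℕ :=
  ((Finset.range l.length).filter fun j => is01 (l.drop j) = true).card

/-- The underlying function of `w_k ∈ Bₙ`: `k ↦ -(k+2)`, `k+2 ↦ -k`, and `i ↦ -i` for all
other `i ∈ {1, …, n}`, extended by `w(-i) = -w(i)` and fixing all integers outside
`{-n, …, -1, 1, …, n}`. -/
def wkFun (n k : ℕ) : ℤ → ℤ := fun i =>
  if -(n : ℤ) ≤ i ∧ i ≤ (n : ℤ) then
    if i = (k : ℤ) then -((k : ℤ) + 2)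
    else if i = (k : ℤ) + 2 then -(k : ℤ)
    else if i = -(k : ℤ) then (k : ℤ) + 2
    else if i = -((k : ℤ) + 2) then (k : ℤ)
    else -i
  else i

/-- The underlying function of `w' ∈ Bₙ`: `1 ↦ 1`, `2 ↦ 2`, and `i ↦ -i` for `3 ≤ i ≤ n`,
extended by `w(-i) = -w(i)` and fixing all integers outside `{-n, …, -1, 1, …, n}`. -/
def wpFun (n : ℕ) : ℤ → ℤ := fun i =>
  if (-(n : ℤ) ≤ i ∧ i ≤ (n : ℤ)) ∧ (i < -2 ∨ 2 < i) then -i else i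

/-- `w`, viewed as a signed permutation of `{1, …, n}` via the values `w(1), …, w(n)`,
contains the signed pattern `p` (given by its list of values `p(1), …, p(m)`). -/
def ContainsPattern (n : ℕ) (w : ℤ → ℤ) (p : List ℤ) : Prop :=
  ∃ j : Fin p.length → ℤ, StrictMono j ∧ (∀ r, 1 ≤ j r ∧ j r ≤ (n : ℤ)) ∧
    (∀ r s, w (j r) < w (j s) ↔ p.get r < p.get s) ∧
    (∀ r, w (j r) < 0 ↔ p.get r < 0)

/-! The prefixes `0101` and `1010` are the reduced words of the longest element of `B₂`, and
`w' = w₀(B₂) w₀(Bₙ)`.  More generally, for `m ≤ n` every reduced word of `w₀(Bₘ)` extends to a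
reduced word of `w₀(Bₙ)`; once one extension of a prefix `p` is reduced, the reduced extensions of
`p` are exactly the words `p ++ l` with `l` reduced, because the length of `p ++ l` only depends on
that of `l`.  The extension is found by writing `w₀(Bₙ)` as the product of the `n` sign changes,
a word of length `1 + 3 + ⋯ + (2n - 1) = n²`; it is reduced because `w₀(Bₙ)` inverts all `n²`
positive roots and multiplying by one generator creates at most one inversion. -/

section Generators

lemma sB_apply (i : ℕ) (x : ℤ) : sB i x =
    if i = 0 then (if x = 1 then -1 else if x = -1 then 1 else x)
    else if x = i then i + 1 else if x = i + 1 then i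
    else if x = -i then -(i + 1) else if x = -(i + 1) then -i else x := by
  unfold sB
  by_cases hi : i = 0
  · simp only [hi, if_true, Equiv.swap_apply_def]
  · simp only [hi, if_false, Equiv.Perm.mul_apply, Equiv.swap_apply_def]
    split_ifs <;> omega

lemma odd_sB (i : ℕ) : Function.Odd (sB i) := by
  intro x
  simp only [sB_apply]
  split_ifs <;> omega

lemma sB_mul_self (i : ℕ) : sB i * sB i = 1 := by
  ext x
  have hx := sB_apply i x
  rw [Equiv.Perm.mul_apply, Equiv.Perm.one_apply, sB_apply]
  split_ifs at hx ⊢ <;> omega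

lemma inv_sB (i : ℕ) : (sB i)⁻¹ = sB i :=
  inv_eq_of_mul_eq_one_left (sB_mul_self i)

lemma eq_or_eq_of_sB_lt_sB {i : ℕ} {u v : ℤ} (huv : u < v) (hne : u ≠ -v)
    (h : sB i v < sB i u) :
    (u = i ∧ v = i + 1) ∨ (u = -(i + 1) ∧ v = -i) := by
  rw [sB_apply, sB_apply] at h
  split_ifs at h <;> omega

end Generators

section WordProd

lemma wordProd_nil : wordProd [] = 1 := rfl

lemma wordProd_cons (i : ℕ) (l : List ℕ) : wordProd (i :: l) = sB i * wordProd l := by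
  simp only [wordProd, List.map_cons, List.prod_cons]

lemma wordProd_append (l l' : List ℕ) : wordProd (l ++ l') = wordProd l * wordProd l' := by
  simp only [wordProd, List.map_append, List.prod_append]

lemma wordProd_reverse (l : List ℕ) : wordProd l.reverse = (wordProd l)⁻¹ := by
  induction l with
  | nil => rfl
  | cons i l ih =>
    rw [List.reverse_cons, wordProd_append, ih, wordProd_cons, wordProd_cons, wordProd_nil,
      mul_one, mul_inv_rev, inv_sB]

lemma odd_wordProd (l : List ℕ) : Function.Odd (wordProd l) := by
  induction l with
  | nil => exact fun _ => rfl
  | cons i l ih =>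
    intro x
    rw [wordProd_cons, Equiv.Perm.mul_apply, Equiv.Perm.mul_apply, ih x, odd_sB]

end WordProd

section Inversions

/-- The positive roots of type `Bₙ`: the pair `⟨k, a⟩` with `|a| ≤ k < n` stands for the root
`e_{k+1} - e_a`, where `e_0 = 0` and `e_{-a} = -e_a`.  In particular `⟨k, 0⟩` is the short root
`e_{k+1}`. -/
noncomputable def positiveRootsB (n : ℕ) : Finset (Σ _ : ℕ, ℤ) :=
  (Finset.range n).sigma fun k => Finset.Icc (-(k : ℤ)) k

/-- The positive roots `e_{k+1} - e_a` of type `Bₙ` made negative by `w`; the cardinality of this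
set bounds from below the length of any word for `w`. -/
noncomputable def inversionsB (n : ℕ) (w : Equiv.Perm ℤ) : Finset (Σ _ : ℕ, ℤ) :=
  (positiveRootsB n).filter fun r => w (r.1 + 1) < w r.2

lemma mem_positiveRootsB {n k : ℕ} {a : ℤ} :
    (⟨k, a⟩ : Σ _ : ℕ, ℤ) ∈ positiveRootsB n ↔ k < n ∧ -(k : ℤ) ≤ a ∧ a ≤ k := by
  simp only [positiveRootsB, Finset.mem_sigma, Finset.mem_range, Finset.mem_Icc]

lemma mem_inversionsB {n k : ℕ} {a : ℤ} {w : Equiv.Perm ℤ} :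
    (⟨k, a⟩ : Σ _ : ℕ, ℤ) ∈ inversionsB n w ↔
      (k < n ∧ -(k : ℤ) ≤ a ∧ a ≤ k) ∧ w (k + 1) < w a := by
  rw [inversionsB, Finset.mem_filter, mem_positiveRootsB]

lemma card_positiveRootsB (n : ℕ) : (positiveRootsB n).card = n ^ 2 := by
  have card_fiber (k : ℕ) : (Finset.Icc (-(k : ℤ)) k).card = 2 * k + 1 := by
    rw [Int.card_Icc]
    omega
  simp only [positiveRootsB, Finset.card_sigma, card_fiber]
  induction n with
  | zero => rfl
  | succ n ih =>
    rw [Finset.sum_range_succ, ih]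
    ring

lemma inversionsB_one (n : ℕ) : inversionsB n 1 = ∅ := by
  refine Finset.eq_empty_of_forall_notMem fun ⟨k, a⟩ h => ?_
  simp only [mem_inversionsB, Equiv.Perm.one_apply] at h
  omega

lemma eq_or_eq_of_mem_inversionsB_sB_mul {n i k : ℕ} {a : ℤ} {w : Equiv.Perm ℤ}
    (hw : Function.Odd w) (h : ⟨k, a⟩ ∈ inversionsB n (sB i * w) \ inversionsB n w) :
    (w a = i ∧ w (k + 1) = i + 1) ∨ (w (-(k + 1)) = i ∧ w (-a) = i + 1) := by
  rw [Finset.mem_sdiff, mem_inversionsB, mem_inversionsB] at h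
  obtain ⟨⟨hroot, hlt⟩, hnot⟩ := h
  have hne : w a ≠ w (k + 1) := w.injective.ne (by omega)
  have hne_neg : w a ≠ -w (k + 1) := hw (k + 1) ▸ w.injective.ne (by omega)
  have hle : w a ≤ w (k + 1) := not_lt.mp fun hgt => hnot ⟨hroot, hgt⟩
  have := eq_or_eq_of_sB_lt_sB (hle.lt_of_ne hne) hne_neg hlt
  rw [hw, hw]
  omega

lemma card_inversionsB_sB_mul_le (n i : ℕ) {w : Equiv.Perm ℤ} (hw : Function.Odd w) :
    (inversionsB n (sB i * w)).card ≤ (inversionsB n w).card + 1 := by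
  suffices hnew : (inversionsB n (sB i * w) \ inversionsB n w).card ≤ 1 by
    have := Finset.card_le_card_sdiff_add_card
      (s := inversionsB n (sB i * w)) (t := inversionsB n w)
    omega
  -- A new inversion is `e_d - e_c` or its negative, where `c = w⁻¹ i` and `d = w⁻¹ (i + 1)`;
  -- only one of these two roots is positive.
  have eq_symm_apply {x y : ℤ} (h : w x = y) : x = w.symm y := w.eq_symm_apply.mpr h
  refine Finset.card_le_one.mpr fun ⟨k, a⟩ h ⟨k', a'⟩ h' => ?_
  have hroot := (mem_inversionsB.mp (Finset.mem_sdiff.mp h).1).1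
  have hroot' := (mem_inversionsB.mp (Finset.mem_sdiff.mp h').1).1
  have hka := (eq_or_eq_of_mem_inversionsB_sB_mul hw h).imp
    (And.imp eq_symm_apply eq_symm_apply) (And.imp eq_symm_apply eq_symm_apply)
  have hka' := (eq_or_eq_of_mem_inversionsB_sB_mul hw h').imp
    (And.imp eq_symm_apply eq_symm_apply) (And.imp eq_symm_apply eq_symm_apply)
  obtain ⟨rfl, rfl⟩ : k = k' ∧ a = a' := by omega
  rfl

lemma card_inversionsB_wordProd_le_length (n : ℕ) (l : List ℕ) :
    (inversionsB n (wordProd l)).card ≤ l.length := by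
  induction l with
  | nil => rw [wordProd_nil, inversionsB_one, Finset.card_empty, List.length_nil]
  | cons i l ih =>
    rw [wordProd_cons, List.length_cons]
    exact (card_inversionsB_sB_mul_le n i (odd_wordProd l)).trans (Nat.add_le_add_right ih 1)

end Inversions

section LongestElement

lemma w0B_apply (n : ℕ) (x : ℤ) :
    w0B n x = if -(n : ℤ) ≤ x ∧ x ≤ n then -x else x := rfl

lemma inv_w0B (n : ℕ) : (w0B n)⁻¹ = w0B n := rfl

lemma w0B_zero : w0B 0 = 1 := by
  ext x
  rw [w0B_apply, Equiv.Perm.one_apply]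
  split_ifs <;> omega

lemma w0B_succ (n : ℕ) :
    w0B (n + 1) = w0B n * Equiv.swap ((n : ℤ) + 1) (-((n : ℤ) + 1)) := by
  ext x
  simp only [Equiv.Perm.mul_apply, w0B_apply, Equiv.swap_apply_def]
  split_ifs <;> omega

lemma inversionsB_w0B (n : ℕ) : inversionsB n (w0B n) = positiveRootsB n := by
  refine Finset.filter_true_of_mem fun ⟨k, a⟩ h => ?_
  rw [mem_positiveRootsB] at h
  simp only [w0B_apply]
  split_ifs <;> omega

lemma eq_w0B_mul_w0B_of_apply_eq_wpFun {n : ℕ} (hn : 2 ≤ n) {w : Equiv.Perm ℤ}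
    (hw : ∀ i, w i = wpFun n i) : w = w0B 2 * w0B n := by
  ext x
  simp only [hw, wpFun, Equiv.Perm.mul_apply, w0B_apply, Nat.cast_ofNat]
  split_ifs <;> omega

lemma sq_le_length_of_wordProd_eq_w0B {n : ℕ} {l : List ℕ} (h : wordProd l = w0B n) :
    n ^ 2 ≤ l.length := by
  rw [← card_positiveRootsB, ← inversionsB_w0B, ← h]
  exact card_inversionsB_wordProd_le_length n l

/-- The word `k ⋯ 1 0 1 ⋯ k` for the sign change of `k + 1`. -/
def signChangeWord : ℕ → List ℕ
  | 0 => [0]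
  | k + 1 => (k + 1) :: (signChangeWord k ++ [k + 1])

lemma wordProd_signChangeWord (k : ℕ) :
    wordProd (signChangeWord k) = Equiv.swap ((k : ℤ) + 1) (-((k : ℤ) + 1)) := by
  induction k with
  | zero => rfl
  | succ k ih =>
    have hs : sB (k + 1) ((k : ℤ) + 1) = ((k + 1 : ℕ) : ℤ) + 1 := by
      simp only [sB_apply, k.succ_ne_zero, if_false, Nat.cast_succ, if_true]
    rw [signChangeWord, wordProd_cons, wordProd_append, wordProd_cons, wordProd_nil, mul_one, ih,
      ← mul_assoc, Equiv.mul_swap_eq_swap_mul, mul_assoc, sB_mul_self, mul_one, odd_sB, hs]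

lemma length_signChangeWord (k : ℕ) : (signChangeWord k).length = 2 * k + 1 := by
  induction k with
  | zero => rfl
  | succ k ih =>
    rw [signChangeWord, List.length_cons, List.length_append, ih, List.length_singleton]
    ring

lemma le_of_mem_signChangeWord {i k : ℕ} (h : i ∈ signChangeWord k) : i ≤ k := by
  induction k with
  | zero => exact (List.mem_singleton.mp h).le
  | succ k ih =>
    simp only [signChangeWord, List.mem_cons, List.mem_append, List.not_mem_nil, or_false] at h
    rcases h with rfl | h | rfl
    · rfl
    · exact (ih h).trans k.le_succ
    · rfl

/-- The word `0 · 101 · 21012 ⋯` for `w₀ᴮ`, which changes the signs of `1, …, n` in turn. -/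
def longestWordB (n : ℕ) : List ℕ := (List.range n).flatMap signChangeWord

lemma longestWordB_succ (n : ℕ) :
    longestWordB (n + 1) = longestWordB n ++ signChangeWord n := by
  simp only [longestWordB, List.range_succ, List.flatMap_append, List.flatMap_singleton]

lemma longestWordB_prefix {m n : ℕ} (hmn : m ≤ n) : longestWordB m <+: longestWordB n := by
  induction n, hmn using Nat.le_induction with
  | base => exact List.prefix_rfl
  | succ n _ ih => exact longestWordB_succ n ▸ ih.trans (List.prefix_append _ _)

lemma wordProd_longestWordB (n : ℕ) : wordProd (longestWordB n) = w0B n := by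
  induction n with
  | zero => exact w0B_zero.symm
  | succ n ih =>
    rw [longestWordB_succ, wordProd_append, ih, wordProd_signChangeWord, w0B_succ]

lemma length_longestWordB (n : ℕ) : (longestWordB n).length = n ^ 2 := by
  induction n with
  | zero => rfl
  | succ n ih =>
    rw [longestWordB_succ, List.length_append, ih, length_signChangeWord]
    ring

lemma lt_of_mem_longestWordB {i n : ℕ} (h : i ∈ longestWordB n) : i < n := by
  obtain ⟨k, hk, hi⟩ := List.mem_flatMap.mp h
  exact (le_of_mem_signChangeWord hi).trans_lt (List.mem_range.mp hk)

lemma isReducedWord_w0B_iff {n : ℕ} {l : List ℕ} :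
    IsReducedWord n (w0B n) l ↔
      (∀ i ∈ l, i < n) ∧ wordProd l = w0B n ∧ l.length = n ^ 2 := by
  constructor
  · rintro ⟨hletters, hprod, hmin⟩
    have hle := hmin _ (fun _ => lt_of_mem_longestWordB) (wordProd_longestWordB n)
    rw [length_longestWordB] at hle
    exact ⟨hletters, hprod, hle.antisymm (sq_le_length_of_wordProd_eq_w0B hprod)⟩
  · rintro ⟨hletters, hprod, hlength⟩
    exact ⟨hletters, hprod, fun l' _ h => hlength ▸ sq_le_length_of_wordProd_eq_w0B h⟩

lemma isReducedWord_longestWordB (n : ℕ) : IsReducedWord n (w0B n) (longestWordB n) :=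
  isReducedWord_w0B_iff.mpr
    ⟨fun _ => lt_of_mem_longestWordB, wordProd_longestWordB n, length_longestWordB n⟩

end LongestElement

namespace IsReducedWord

variable {n : ℕ} {u : Equiv.Perm ℤ} {p q l : List ℕ}

lemma reverse (h : IsReducedWord n u l) : IsReducedWord n u⁻¹ l.reverse := by
  obtain ⟨hletters, hprod, hmin⟩ := h
  refine ⟨fun i hi => hletters i (List.mem_reverse.mp hi), by rw [wordProd_reverse, hprod],
    fun l' hl' hprod' => ?_⟩
  have := hmin l'.reverse (fun i hi => hl' i (List.mem_reverse.mp hi))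
    (by rw [wordProd_reverse, hprod', inv_inv])
  simpa only [List.length_reverse] using this

lemma of_append_right (h : IsReducedWord n u (p ++ l)) : IsReducedWord n (wordProd l) l := by
  obtain ⟨hletters, hprod, hmin⟩ := h
  rw [List.forall_mem_append] at hletters
  refine ⟨hletters.2, rfl, fun l' hl' hprod' => ?_⟩
  have := hmin (p ++ l') (List.forall_mem_append.mpr ⟨hletters.1, hl'⟩)
    (by rw [wordProd_append, hprod', ← wordProd_append, hprod])
  simpa only [List.length_append, Nat.add_le_add_iff_left] using this

lemma append_iff (h : IsReducedWord n u (p ++ q)) :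
    IsReducedWord n u (p ++ l) ↔ IsReducedWord n (wordProd q) l := by
  obtain ⟨hletters, rfl, hmin⟩ := h
  rw [List.forall_mem_append] at hletters
  constructor
  · intro hl
    have hprod : wordProd l = wordProd q := by
      simpa only [wordProd_append, mul_right_inj] using hl.2.1
    exact hprod ▸ hl.of_append_right
  · rintro ⟨hl, hprod, hlmin⟩
    have hlength : (p ++ l).length ≤ (p ++ q).length := by
      simpa only [List.length_append, Nat.add_le_add_iff_left] using hlmin q hletters.2 rfl
    exact ⟨List.forall_mem_append.mpr ⟨hletters.1, hl⟩,
      by rw [wordProd_append, hprod, wordProd_append],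
      fun l' hl' hprod' => hlength.trans (hmin l' hl' hprod')⟩

lemma bijOn_drop (h : IsReducedWord n u (p ++ q)) :
    Set.BijOn (List.drop p.length) {l | IsReducedWord n u l ∧ l.take p.length = p}
      (RSet n (wordProd q)) := by
  have append_drop {l : List ℕ} (hl : l.take p.length = p) : p ++ l.drop p.length = l :=
    List.prefix_iff_eq_append.mp (List.prefix_iff_eq_take.mpr hl.symm)
  refine Set.InvOn.bijOn (f' := (p ++ ·)) ⟨fun l hl => append_drop hl.2, fun _ _ => List.drop_left⟩
    (fun l hl => h.append_iff.mp ?_) fun l hl => ⟨h.append_iff.mpr hl, List.take_left⟩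
  exact (append_drop hl.2).symm ▸ hl.1

end IsReducedWord

lemma exists_isReducedWord_w0B_append {m n : ℕ} (hmn : m ≤ n) {p : List ℕ}
    (hp : IsReducedWord m (w0B m) p) :
    ∃ q, IsReducedWord n (w0B n) (p ++ q) ∧ wordProd q = w0B m * w0B n := by
  obtain ⟨hletters, hprod, hlength⟩ := isReducedWord_w0B_iff.mp hp
  obtain ⟨q, hq⟩ := longestWordB_prefix hmn
  have hword := isReducedWord_w0B_iff.mp (hq ▸ isReducedWord_longestWordB n)
  rw [List.forall_mem_append, wordProd_append, wordProd_longestWordB, List.length_append,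
    length_longestWordB] at hword
  obtain ⟨⟨-, hq_letters⟩, hq_prod, hq_length⟩ := hword
  have hpq_letters : ∀ i ∈ p ++ q, i < n :=
    List.forall_mem_append.mpr ⟨fun i hi => (hletters i hi).trans_le hmn, hq_letters⟩
  refine ⟨q, isReducedWord_w0B_iff.mpr ⟨hpq_letters, ?_, ?_⟩, ?_⟩
  · rw [wordProd_append, hprod, hq_prod]
  · rw [List.length_append, hlength, hq_length]
  · rw [← inv_w0B m]
    exact eq_inv_mul_of_mul_eq hq_prod

lemma bijOn_drop_w0B {m n : ℕ} (hmn : m ≤ n) {p : List ℕ} (hp : IsReducedWord m (w0B m) p) :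
    Set.BijOn (List.drop (m ^ 2)) {l | IsReducedWord n (w0B n) l ∧ l.take (m ^ 2) = p}
      (RSet n (w0B m * w0B n)) := by
  obtain ⟨q, hpq, hq⟩ := exists_isReducedWord_w0B_append hmn hp
  rw [← (isReducedWord_w0B_iff.mp hp).2.2, ← hq]
  exact hpq.bijOn_drop

lemma natCard_union_eq_two_mul {α β : Type*} {f g : α → β} {s s' : Set α} {t : Set β}
    (hf : Set.BijOn f s t) (hg : Set.BijOn g s' t) (hss' : Disjoint s s') :
    Nat.card ↥(s ∪ s') = 2 * Nat.card t := by
  classical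
  calc Nat.card ↥(s ∪ s')
    _ = Nat.card (Bool × t) := Nat.card_congr <|
      (Equiv.Set.union hss').trans <|
        (Equiv.sumCongr (hf.equiv f) (hg.equiv g)).trans (Equiv.boolProdEquivSum t).symm
    _ = 2 * Nat.card t := by rw [Nat.card_prod, Nat.card_eq_fintype_card, Fintype.card_bool]

theorem drop_four_bijection_general {m n : ℕ} (hmn : m ≤ n) {p q : List ℕ}
    (hp : IsReducedWord m (w0B m) p) (hq : IsReducedWord m (w0B m) q) (hpq : p ≠ q) :
    Set.BijOn (fun l => l.drop (m ^ 2))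
      {l : List ℕ | IsReducedWord n (w0B n) l ∧ l.take (m ^ 2) = p}
      (RSet n (w0B m * w0B n)) ∧
    Set.BijOn (fun l => l.drop (m ^ 2))
      {l : List ℕ | IsReducedWord n (w0B n) l ∧ l.take (m ^ 2) = q}
      (RSet n (w0B m * w0B n)) ∧
    Nat.card {l : List ℕ // IsReducedWord n (w0B n) l ∧
        (l.take (m ^ 2) = p ∨ l.take (m ^ 2) = q)}
      = 2 * Nat.card ↥(RSet n (w0B m * w0B n)) := by
  have hbij_p := bijOn_drop_w0B hmn hp
  have hbij_q := bijOn_drop_w0B hmn hq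
  refine ⟨hbij_p, hbij_q, ?_⟩
  simp only [and_or_left]
  exact natCard_union_eq_two_mul hbij_p hbij_q <|
    Set.disjoint_left.mpr fun l hl hl' => hpq (hl.2.symm.trans hl'.2)

/-- Let `n ≥ 2` and let `w = w' ∈ Bₙ`.  Deleting the first four letters is a bijection
from the reduced decompositions of `w₀ᴮ` starting with `(0,1,0,1)` onto `R(w')`, and
likewise for those starting with `(1,0,1,0)`; consequently the number of reduced
decompositions of `w₀ᴮ` starting with one of these two factors is `2 · |R(w')|`. -/
theorem drop_four_bijection (n : ℕ) (hn : 2 ≤ n)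
    (w : Equiv.Perm ℤ) (hw : ∀ i : ℤ, w i = wpFun n i) :
    Set.BijOn (fun l => l.drop 4)
      {l : List ℕ | IsReducedWord n (w0B n) l ∧ l.take 4 = [0, 1, 0, 1]}
      (RSet n w) ∧
    Set.BijOn (fun l => l.drop 4)
      {l : List ℕ | IsReducedWord n (w0B n) l ∧ l.take 4 = [1, 0, 1, 0]}
      (RSet n w) ∧
    Nat.card {l : List ℕ // IsReducedWord n (w0B n) l ∧
        (l.take 4 = [0, 1, 0, 1] ∨ l.take 4 = [1, 0, 1, 0])}
      = 2 * Nat.card ↥(RSet n w) := by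
  obtain rfl := eq_w0B_mul_w0B_of_apply_eq_wpFun hn hw
  have h0101 : IsReducedWord 2 (w0B 2) [0, 1, 0, 1] := isReducedWord_longestWordB 2
  exact drop_four_bijection_general hn h0101 h0101.reverse (by decide)
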